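/- arXiv:1009.0079 — 3 statements merged into one kernel-verified Lean document; each statement's English description precedes it below -/
import Mathlib

section
/- Let (X, ‖·‖) be a real normed space and let k ≥ 2 be a positive integer. If for all x₁, ..., x_k ∈ X one has ∑_{ε ∈ {-1,1}^{k-1}} ‖x₁ + ∑_{i=2}^k ε_i x_i‖² = ∑_{ε ∈ {-1,1}^{k-1}} (‖x₁‖ + ∑_{i=2}^k ε_i ‖x_i‖)², then the norm ‖·‖ satisfies the parallelogram law ‖x + y‖² + ‖x − y‖² = 2‖x‖² + 2‖y‖² for all x, y ∈ X (equivalently, by the Jordan–von Neumann theorem, the norm is induced by an inner product). -/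
/-!
Take `x₁ = x`, `x₂ = y` and all other vectors zero. Every summand on either side then depends on
`ε` only through `ε₂`, and each value of `ε₂` is taken by half of the sign vectors
(`two_mul_sum_signs`). So the hypothesis is a positive multiple of
`‖x + y‖² + ‖x - y‖² = (‖x‖ + ‖y‖)² + (‖x‖ - ‖y‖)²`, which is the parallelogram law.
-/

/-- Flipping the sign at index `1` is an involution of the sign vectors with `ε 0 = true`, so a
function of `ε 1` alone averages to the mean of its two values. -/
lemma two_mul_sum_signs (n : ℕ) (F : Bool → ℝ) :
    2 * ∑ ε ∈ Finset.univ.filter (fun ε : Fin (n + 2) → Bool => ε 0 = true), F (ε 1) =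
      (Finset.univ.filter (fun ε : Fin (n + 2) → Bool => ε 0 = true)).card *
        (F true + F false) := by
  have hflip : ∑ ε ∈ Finset.univ.filter (fun ε : Fin (n + 2) → Bool => ε 0 = true), F (ε 1) =
      ∑ ε ∈ Finset.univ.filter (fun ε : Fin (n + 2) → Bool => ε 0 = true), F (!(ε 1)) := by
    refine Finset.sum_nbij' (fun ε => Function.update ε 1 (!(ε 1)))
      (fun ε => Function.update ε 1 (!(ε 1))) ?_ ?_ ?_ ?_ ?_ <;> simp
  rw [two_mul]
  nth_rewrite 2 [hflip]
  rw [← Finset.sum_add_distrib, ← nsmul_eq_mul, ← Finset.sum_const]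
  refine Finset.sum_congr rfl fun ε _ => ?_
  cases ε 1 <;> simp [add_comm]

/-- If a real normed space `X` satisfies, for some `k ≥ 2`, the equality
`∑_ε ‖x₁ + ∑_{i=2}^k ε_i x_i‖² = ∑_ε (‖x₁‖ + ∑_{i=2}^k ε_i ‖x_i‖)²` for all
`x₁, …, x_k ∈ X` (sums over all sign vectors `ε = (ε₂, …, ε_k)`, `ε_i ∈ {-1, 1}`,
encoded as `ε : Fin k → Bool` with `ε 0 = true`), then the norm satisfies the
parallelogram law. -/
theorem stmt_5 {X : Type*} [NormedAddCommGroup X] [NormedSpace ℝ X]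
    (k : ℕ) (hk : 2 ≤ k)
    (h : ∀ x : Fin k → X,
      ∑ ε ∈ Finset.univ.filter (fun ε : Fin k → Bool => ε ⟨0, by omega⟩ = true),
        ‖∑ i, (if ε i then (1 : ℝ) else -1) • x i‖ ^ 2 =
      ∑ ε ∈ Finset.univ.filter (fun ε : Fin k → Bool => ε ⟨0, by omega⟩ = true),
        (∑ i, (if ε i then (1 : ℝ) else -1) * ‖x i‖) ^ 2) :
    ∀ x y : X, ‖x + y‖ ^ 2 + ‖x - y‖ ^ 2 = 2 * ‖x‖ ^ 2 + 2 * ‖y‖ ^ 2 := by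
  intro x y
  obtain ⟨n, rfl⟩ : ∃ n, k = n + 2 := ⟨k - 2, by omega⟩
  have h0 : (⟨0, by omega⟩ : Fin (n + 2)) = 0 := rfl
  have hxy := h (Fin.cons x (Fin.cons y (fun _ => 0)))
  simp only [h0] at hxy
  have hl : ∀ ε ∈ Finset.univ.filter (fun ε : Fin (n + 2) → Bool => ε 0 = true),
      ‖∑ i, (if ε i then (1 : ℝ) else -1) •
        (Fin.cons x (Fin.cons y (fun _ => 0)) : Fin (n + 2) → X) i‖ ^ 2 =
      (fun b : Bool => ‖x + (if b then (1 : ℝ) else -1) • y‖ ^ 2) (ε 1) := by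
    intro ε hε
    have h1 : ε 0 = true := by simpa using hε
    simp [Fin.sum_univ_succ, h1]
  have hr : ∀ ε ∈ Finset.univ.filter (fun ε : Fin (n + 2) → Bool => ε 0 = true),
      (∑ i, (if ε i then (1 : ℝ) else -1) *
        ‖(Fin.cons x (Fin.cons y (fun _ => 0)) : Fin (n + 2) → X) i‖) ^ 2 =
      (fun b : Bool => (‖x‖ + (if b then (1 : ℝ) else -1) * ‖y‖) ^ 2) (ε 1) := by
    intro ε hε
    have h1 : ε 0 = true := by simpa using hε
    simp [Fin.sum_univ_succ, h1]
  rw [Finset.sum_congr rfl hl, Finset.sum_congr rfl hr] at hxy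
  have h2 := congrArg (fun t : ℝ => 2 * t) hxy
  simp only [two_mul_sum_signs n (fun b : Bool => ‖x + (if b then (1 : ℝ) else -1) • y‖ ^ 2),
    two_mul_sum_signs n (fun b : Bool => (‖x‖ + (if b then (1 : ℝ) else -1) * ‖y‖) ^ 2)] at h2
  have hcard : ((Finset.univ.filter
      (fun ε : Fin (n + 2) → Bool => ε 0 = true)).card : ℝ) ≠ 0 := by
    rw [Nat.cast_ne_zero, Finset.card_ne_zero]
    exact ⟨fun _ => true, by simp⟩
  have h3 := mul_left_cancel₀ hcard h2
  simp only [if_true, Bool.false_eq_true, if_false, one_smul, neg_smul, ← sub_eq_add_neg] at h3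
  rw [h3]
  ring
end

section
/- Let (X, ‖·‖) be a real normed space and let k ≥ 2 be a positive integer. If ∑_{ε ∈ {-1,1}^{k-1}} ‖x₁ + ∑_{i=2}^k ε_i x_i‖² ≤ k·2^{k-1} for all unit vectors x₁, ..., x_k ∈ X (i.e. ‖x₁‖ = ⋯ = ‖x_k‖ = 1), then the norm ‖·‖ satisfies the parallelogram law ‖x + y‖² + ‖x − y‖² = 2‖x‖² + 2‖y‖² for all x, y ∈ X (equivalently, by the Jordan–von Neumann theorem, the norm is induced by an inner product). -/
/-!
Fix linearly independent `x, y` and pull the squared norm back to the plane as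
`f (s, t) = ‖s x + t y‖²`. Among the positive semidefinite quadratic forms `q ≤ f`, one of maximal
determinant exists by compactness (`exists_max_det`; geometrically, this is the minimal-area ellipse
around the unit ball). Call `p` a *contact vector* if `q p = f p`.

* Maximality forces two linearly independent contact vectors: if all of them lay on one line, `q`
  could be shrunk slightly along that line and stretched more across it, increasing its
  determinant while keeping `q ≤ f` (`exists_contact_off_line`).
* A quadratic form satisfies the identity `∑_ε q (∑ ε_i w_i) = 2^(k-1) ∑ q (w_i)`
  (`sum_signs_quadratic`). If all `w_i` are contact vectors with `f (w_i) = 1`, the hypothesis on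
  the norm together with `q ≤ f` forces `q = f` at every `∑ ε_i w_i`. Taking `w = (u, v, …, v)` and
  all signs `+`, the vector `u + (k - 1) v` is a contact vector whenever `u, v` are unit ones.
* The contact set is closed and invariant under scaling, and by the previous point it meets the
  interior of the cone spanned by any two of its vectors. Hence it has no angular gaps and is closed
  under addition (`add_mem_of_no_gap`), so it is the whole plane.

Thus `f = q` is a quadratic form, which is the parallelogram law for `x, y`.
-/

/-- The binary quadratic form `a s² + 2 b s t + c t²`. -/
def binForm (a b c : ℝ) (p : ℝ × ℝ) : ℝ := a * p.1 ^ 2 + 2 * b * p.1 * p.2 + c * p.2 ^ 2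

lemma continuous_binForm (a b c : ℝ) : Continuous (binForm a b c) := by
  unfold binForm; fun_prop

lemma binForm_smul (a b c r : ℝ) (p : ℝ × ℝ) :
    binForm a b c (r • p) = r ^ 2 * binForm a b c p := by
  simp only [binForm, Prod.smul_fst, Prod.smul_snd, smul_eq_mul]; ring

lemma binForm_parallelogram (a b c : ℝ) (p p' : ℝ × ℝ) :
    binForm a b c (p + p') + binForm a b c (p - p')
      = 2 * binForm a b c p + 2 * binForm a b c p' := by
  simp only [binForm, Prod.fst_add, Prod.snd_add, Prod.fst_sub, Prod.snd_sub]; ring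

lemma isCompact_circle : IsCompact {p : ℝ × ℝ | p.1 ^ 2 + p.2 ^ 2 = 1} := by
  refine (isCompact_Icc (a := ((-1, -1) : ℝ × ℝ)) (b := (1, 1))).of_isClosed_subset
    (isClosed_eq (by fun_prop) (by fun_prop)) ?_
  rintro ⟨s, t⟩ h
  simp only [Set.mem_ofPred_eq] at h
  refine ⟨⟨?_, ?_⟩, ⟨?_, ?_⟩⟩ <;> dsimp only <;> nlinarith [sq_nonneg s, sq_nonneg t]

lemma circle_nonempty : {p : ℝ × ℝ | p.1 ^ 2 + p.2 ^ 2 = 1}.Nonempty := ⟨(1, 0), by simp⟩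

lemma exists_smul_circle (p : ℝ × ℝ) :
    ∃ r : ℝ, ∃ e : ℝ × ℝ, e.1 ^ 2 + e.2 ^ 2 = 1 ∧ p = r • e := by
  by_cases hp : p.1 ^ 2 + p.2 ^ 2 = 0
  · have h1 : p.1 = 0 := by nlinarith [sq_nonneg p.1, sq_nonneg p.2]
    have h2 : p.2 = 0 := by nlinarith [sq_nonneg p.1, sq_nonneg p.2]
    exact ⟨0, (1, 0), by simp, by ext <;> simp [h1, h2]⟩
  · have hpos : 0 < p.1 ^ 2 + p.2 ^ 2 := lt_of_le_of_ne (by positivity) (Ne.symm hp)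
    have hs := Real.sq_sqrt hpos.le
    have hr := (Real.sqrt_pos.2 hpos).ne'
    refine ⟨√(p.1 ^ 2 + p.2 ^ 2), (√(p.1 ^ 2 + p.2 ^ 2))⁻¹ • p, ?_, ?_⟩
    · simp only [Prod.smul_fst, Prod.smul_snd, smul_eq_mul, mul_pow, inv_pow, hs]
      field_simp
    · rw [smul_smul, mul_inv_cancel₀ hr, one_smul]

/-- Existence of a form of maximal determinant below `f`; the determinant is positive since
`f` dominates a multiple of the standard form. -/
lemma exists_max_det (f : ℝ × ℝ → ℝ) (hf : Continuous f)
    (hhom : ∀ (r : ℝ) p, f (r • p) = r ^ 2 * f p) (hpos : ∀ p, p ≠ 0 → 0 < f p) :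
    ∃ a b c : ℝ, 0 ≤ a ∧ 0 ≤ c ∧ 0 < a * c - b ^ 2 ∧ (∀ p, binForm a b c p ≤ f p) ∧
      ∀ a' b' c' : ℝ, 0 ≤ a' → 0 ≤ c' → 0 ≤ a' * c' - b' ^ 2 →
        (∀ p, binForm a' b' c' p ≤ f p) → a' * c' - b' ^ 2 ≤ a * c - b ^ 2 := by
  obtain ⟨e, he, hmin⟩ := isCompact_circle.exists_isMinOn circle_nonempty hf.continuousOn
  have hm : 0 < f e := hpos e (by rintro rfl; simp at he)
  let K : Set (ℝ × ℝ × ℝ) := {z | 0 ≤ z.1 ∧ 0 ≤ z.2.2 ∧ 0 ≤ z.1 * z.2.2 - z.2.1 ^ 2 ∧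
    ∀ p, binForm z.1 z.2.1 z.2.2 p ≤ f p}
  have hclosed : IsClosed K := by
    simp only [K, Set.ofPred_and, Set.ofPred_forall, binForm]
    refine IsClosed.inter ?_ (IsClosed.inter ?_ (IsClosed.inter ?_ (isClosed_iInter fun p => ?_)))
    all_goals exact isClosed_le (by fun_prop) (by fun_prop)
  have hK : IsCompact K := by
    let R := f (1, 0) + f (0, 1)
    refine (isCompact_Icc (a := ((0, -R, 0) : ℝ × ℝ × ℝ)) (b := (R, R, R))).of_isClosed_subset
      hclosed ?_
    rintro ⟨a, b, c⟩ ⟨h1, h2, h3, h4⟩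
    have ha := h4 (1, 0)
    have hc := h4 (0, 1)
    simp only [binForm] at ha hc h1 h2 h3
    have hb : |b| ≤ R := by
      refine abs_le_of_sq_le_sq ?_ ?_ <;> simp only [R] <;> nlinarith
    have := abs_le.1 hb
    refine ⟨⟨h1, this.1, h2⟩, ⟨?_, this.2, ?_⟩⟩ <;> simp only [R] <;> nlinarith
  have hmem : ((f e, 0, f e) : ℝ × ℝ × ℝ) ∈ K := by
    refine ⟨hm.le, hm.le, by dsimp only; nlinarith, fun p => ?_⟩
    obtain ⟨r, e', he', rfl⟩ := exists_smul_circle p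
    rw [hhom, binForm_smul]
    have : f e ≤ f e' := hmin he'
    have h2 : binForm (f e) 0 (f e) e' = f e := by
      simp only [binForm]; linear_combination (f e) * he'
    dsimp only
    rw [h2]
    gcongr
  obtain ⟨⟨a, b, c⟩, ⟨h1, h2, h3, h4⟩, hmax⟩ := hK.exists_isMaxOn ⟨_, hmem⟩
    (f := fun z : ℝ × ℝ × ℝ => z.1 * z.2.2 - z.2.1 ^ 2) (by fun_prop)
  refine ⟨a, b, c, h1, h2, ?_, h4, fun a' b' c' h1' h2' h3' h4' =>
    hmax (show (a', b', c') ∈ K from ⟨h1', h2', h3', h4'⟩)⟩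
  have := hmax hmem
  simp only [Set.mem_ofPred_eq] at this
  nlinarith

lemma binForm_pos {a b c : ℝ} (ha : 0 ≤ a) (hD : 0 < a * c - b ^ 2) {p : ℝ × ℝ}
    (hp : p ≠ 0) : 0 < binForm a b c p := by
  have ha' : 0 < a := by
    rcases ha.lt_or_eq with h | rfl
    · exact h
    · nlinarith [sq_nonneg b]
  have key : a * binForm a b c p = (a * p.1 + b * p.2) ^ 2 + (a * c - b ^ 2) * p.2 ^ 2 := by
    simp only [binForm]; ring
  have : 0 < a * binForm a b c p := by
    rw [key]
    by_cases h2 : p.2 = 0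
    · have h1 : p.1 ≠ 0 := fun h1 => hp (Prod.ext h1 h2)
      rw [h2]; simp only [mul_zero, add_zero]; positivity
    · positivity
  exact pos_of_mul_pos_right this ha

/-- A form of maximal determinant below `f` touches `f` off any given line `ℝ u`. -/
lemma exists_contact_off_line (f : ℝ × ℝ → ℝ) (hf : Continuous f)
    (hhom : ∀ (r : ℝ) p, f (r • p) = r ^ 2 * f p) {a b c : ℝ} (ha : 0 ≤ a) (hc : 0 ≤ c)
    (hD : 0 < a * c - b ^ 2) (hle : ∀ p, binForm a b c p ≤ f p)
    (hmax : ∀ a' b' c' : ℝ, 0 ≤ a' → 0 ≤ c' → 0 ≤ a' * c' - b' ^ 2 →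
        (∀ p, binForm a' b' c' p ≤ f p) → a' * c' - b' ^ 2 ≤ a * c - b ^ 2)
    (u : ℝ × ℝ) (hu : u ≠ 0) :
    ∃ v : ℝ × ℝ, binForm a b c v = f v ∧ v.1 * u.2 - v.2 * u.1 ≠ 0 := by
  by_contra! hcon
  set D := a * c - b ^ 2 with hDdef
  have hqu : 0 < binForm a b c u := binForm_pos ha hD hu
  -- With `q = φ² + g²` and `g u = 0`, `κ L² = 3 g²` where `L` is the linear form vanishing at `u`.
  set κ := 3 * D / binForm a b c u with hκ
  have hκpos : 0 < κ := by positivity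
  let ψ : ℝ × ℝ → ℝ := fun p => κ * (p.1 * u.2 - p.2 * u.1) ^ 2 - binForm a b c p
  have hq := continuous_binForm a b c
  have hψ : Continuous ψ := by simp only [ψ]; fun_prop
  obtain ⟨e, he, hmin⟩ := isCompact_circle.exists_isMinOn circle_nonempty
    (f := fun p => max (f p - binForm a b c p) (-ψ p)) (by fun_prop)
  obtain ⟨e', he', hmaxψ⟩ := isCompact_circle.exists_isMaxOn circle_nonempty hψ.continuousOn
  set m := max (f e - binForm a b c e) (-ψ e) with hm
  have hmpos : 0 < m := by
    rw [hm, lt_max_iff]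
    rcases (hle e).lt_or_eq with h | h
    · exact Or.inl (sub_pos.2 h)
    · right
      have hL := hcon e h
      have := binForm_pos ha hD (p := e) (by rintro rfl; simp at he)
      simp only [ψ, hL]
      linarith
  set M := max (ψ e') 1 with hM
  have hMpos : 0 < M := lt_max_of_lt_right one_pos
  set δ := min (m / M) (1 / 4) with hδ
  have hδpos : 0 < δ := lt_min (by positivity) (by norm_num)
  have hδ4 : δ ≤ 1 / 4 := min_le_right _ _
  have hδM : δ * M ≤ m := by
    calc δ * M ≤ m / M * M := by gcongr; exact min_le_left _ _
      _ = m := by field_simp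
  have hcirc : ∀ p : ℝ × ℝ, p.1 ^ 2 + p.2 ^ 2 = 1 → binForm a b c p + δ * ψ p ≤ f p := by
    intro p hp
    have h1 : m ≤ max (f p - binForm a b c p) (-ψ p) := hmin hp
    have h2 : ψ p ≤ M := (hmaxψ hp).trans (le_max_left _ _)
    have h3 := hle p
    rcases le_max_iff.1 h1 with h | h
    · nlinarith
    · nlinarith
  have hform : ∀ p, binForm ((1 - δ) * a + δ * κ * u.2 ^ 2) ((1 - δ) * b - δ * κ * (u.1 * u.2))
      ((1 - δ) * c + δ * κ * u.1 ^ 2) p = binForm a b c p + δ * ψ p := by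
    intro p; simp only [ψ, binForm]; ring
  have hdet : ((1 - δ) * a + δ * κ * u.2 ^ 2) * ((1 - δ) * c + δ * κ * u.1 ^ 2)
      - ((1 - δ) * b - δ * κ * (u.1 * u.2)) ^ 2 = (1 - δ) * (1 + 2 * δ) * D := by
    have hκu : κ * binForm a b c u = 3 * D := by rw [hκ]; field_simp
    have : κ * (a * u.1 ^ 2 + 2 * b * u.1 * u.2 + c * u.2 ^ 2) = 3 * D := hκu
    linear_combination (1 - δ) * δ * this - (1 - δ) ^ 2 * hDdef
  have hbig : D < (1 - δ) * (1 + 2 * δ) * D := by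
    have : 1 < (1 - δ) * (1 + 2 * δ) := by nlinarith
    nlinarith
  have h1δ : 0 ≤ 1 - δ := by linarith
  have := hmax ((1 - δ) * a + δ * κ * u.2 ^ 2) ((1 - δ) * b - δ * κ * (u.1 * u.2))
    ((1 - δ) * c + δ * κ * u.1 ^ 2) (by positivity) (by positivity) (by rw [hdet]; linarith) (fun p => by
    rw [hform]
    obtain ⟨r, e₁, he₁, rfl⟩ := exists_smul_circle p
    have hψs : ψ (r • e₁) = r ^ 2 * ψ e₁ := by
      simp only [ψ, binForm_smul, Prod.smul_fst, Prod.smul_snd, smul_eq_mul]; ring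
    rw [hhom, hψs, binForm_smul]
    have := mul_le_mul_of_nonneg_left (hcirc e₁ he₁) (sq_nonneg r)
    linarith)
  rw [hdet] at this
  linarith

/-- A closed scaling-invariant set meeting the open cone between any two of its vectors is closed
under addition: otherwise the segment joining two of its vectors would cross a maximal gap. -/
lemma add_mem_of_no_gap {V : Type*} [AddCommGroup V] [Module ℝ V] [TopologicalSpace V]
    [IsTopologicalAddGroup V] [ContinuousSMul ℝ V] (C : Set V) (hC : IsClosed C)
    (hsmul : ∀ (r : ℝ), ∀ p ∈ C, r • p ∈ C)
    (hcone : ∀ p ∈ C, ∀ p' ∈ C, ∃ α β : ℝ, 0 < α ∧ 0 < β ∧ α • p + β • p' ∈ C)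
    {p p' : V} (hp : p ∈ C) (hp' : p' ∈ C) : p + p' ∈ C := by
  let g : ℝ → V := fun l => (1 - l) • p + l • p'
  have hg : Continuous g := by simp only [g]; fun_prop
  suffices hhalf : g (1 / 2) ∈ C by
    have := hsmul 2 _ hhalf
    simp only [g, smul_add, smul_smul] at this
    norm_num at this
    exact this
  have hT : IsClosed (g ⁻¹' C) := hC.preimage hg
  obtain ⟨l, ⟨⟨hl0, hl1⟩, hl⟩, hlmax⟩ := (isCompact_Icc.inter_right hT).exists_isGreatest
    (s := Set.Icc (0 : ℝ) (1 / 2) ∩ g ⁻¹' C) ⟨0, ⟨le_rfl, by norm_num⟩, by simpa [g] using hp⟩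
  obtain ⟨r, ⟨⟨hr0, hr1⟩, hr⟩, hrmin⟩ := (isCompact_Icc.inter_right hT).exists_isLeast
    (s := Set.Icc (1 / 2 : ℝ) 1 ∩ g ⁻¹' C) ⟨1, ⟨by norm_num, le_rfl⟩, by simpa [g] using hp'⟩
  by_contra hhalf
  have hlr : l < r := by
    rcases hl1.lt_or_eq with h | h
    · linarith
    · exact absurd (h ▸ hl) hhalf
  obtain ⟨α, β, hα, hβ, hmem⟩ := hcone _ hl _ hr
  set w := (α * l + β * r) / (α + β) with hw
  have hwm : w ∈ g ⁻¹' C := by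
    have h1 := hsmul (α + β)⁻¹ _ hmem
    have h2 : (α + β)⁻¹ • (α • g l + β • g r) = g w := by
      simp only [g, hw]
      have : α + β ≠ 0 := by positivity
      match_scalars <;> field_simp
      ring
    rwa [h2] at h1
  have hlw : l < w := by rw [hw, lt_div_iff₀ (by positivity)]; nlinarith
  have hwr : w < r := by rw [hw, div_lt_iff₀ (by positivity)]; nlinarith
  rcases le_total w (1 / 2) with h | h
  · exact absurd (hlmax ⟨⟨by linarith, h⟩, hwm⟩) (not_le.2 hlw)
  · exact absurd (hrmin ⟨⟨h, by linarith⟩, hwm⟩) (not_le.2 hwr)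

lemma sum_signs_quadratic {V : Type*} [AddCommGroup V] [Module ℝ V] (q : V → ℝ)
    (hq : ∀ p p', q (p + p') + q (p - p') = 2 * q p + 2 * q p') (n : ℕ) :
    ∀ (z : V) (w : Fin n → V),
      ∑ ε : Fin n → Bool, q (z + ∑ i, (if ε i then (1 : ℝ) else -1) • w i)
        = 2 ^ n * (q z + ∑ i, q (w i)) := by
  induction n with
  | zero => intro z w; simp
  | succ n ih =>
    intro z w
    rw [← (Fin.consEquiv (fun _ : Fin (n + 1) => Bool)).sum_comp, Fintype.sum_prod_type]
    simp only [Fin.consEquiv_apply, Fin.sum_univ_succ, Fin.cons_zero, Fin.cons_succ,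
      ← add_assoc, Fintype.sum_bool, ih, if_true, Bool.false_eq_true, if_false, one_smul,
      neg_smul, ← sub_eq_add_neg]
    linear_combination 2 ^ n * hq z (w 0)

lemma sum_filter_head {n : ℕ} (F : (Fin (n + 1) → Bool) → ℝ) :
    ∑ ε ∈ Finset.univ.filter (fun ε : Fin (n + 1) → Bool => ε 0 = true), F ε
      = ∑ ε : Fin n → Bool, F (Fin.cons true ε) := by
  rw [Finset.sum_filter, ← (Fin.consEquiv (fun _ : Fin (n + 1) => Bool)).sum_comp,
    Fintype.sum_prod_type]
  simp only [Fin.consEquiv_apply, Fin.cons_zero, Fintype.sum_bool, if_true, Bool.false_eq_true,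
    if_false, Finset.sum_const_zero, add_zero]
  rfl

/-- Equality propagates: under the sign-sum hypothesis, if a quadratic form `q` lies below
`‖P ·‖²` and agrees with it at `u, v` with `P u, P v` unit vectors, it agrees at `u + n v`. -/
lemma contact_add {X : Type*} [NormedAddCommGroup X] [NormedSpace ℝ X] (n : ℕ)
    (h : ∀ x : Fin (n + 1) → X, (∀ i, ‖x i‖ = 1) →
      ∑ ε ∈ Finset.univ.filter (fun ε : Fin (n + 1) → Bool => ε 0 = true),
        ‖∑ i, (if ε i then (1 : ℝ) else -1) • x i‖ ^ 2 ≤ (n + 1) * 2 ^ n)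
    {V : Type*} [AddCommGroup V] [Module ℝ V] (P : V →ₗ[ℝ] X) (q : V → ℝ)
    (hq : ∀ p p', q (p + p') + q (p - p') = 2 * q p + 2 * q p')
    (hle : ∀ p, q p ≤ ‖P p‖ ^ 2) (u v : V) (hu : ‖P u‖ = 1) (hv : ‖P v‖ = 1)
    (hqu : q u = 1) (hqv : q v = 1) :
    q (u + (n : ℝ) • v) = ‖P (u + (n : ℝ) • v)‖ ^ 2 := by
  have h1 := h (Fin.cons (P u) fun _ => P v) (fun i => by
    refine Fin.cases ?_ (fun j => ?_) i <;> simp [hu, hv])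
  rw [sum_filter_head] at h1
  simp only [Fin.sum_univ_succ, Fin.cons_zero, Fin.cons_succ, if_true, one_smul] at h1
  have h2 := sum_signs_quadratic q hq n u (fun _ => v)
  have h3 : ∀ ε : Fin n → Bool,
      P u + ∑ i, (if ε i then (1 : ℝ) else -1) • P v
        = P (u + ∑ i, (if ε i then (1 : ℝ) else -1) • v) := fun ε => by
    simp only [map_add, map_sum, map_smul]
  simp only [h3] at h1
  simp only [hqu, hqv, Finset.sum_const, Finset.card_univ, Fintype.card_fin, nsmul_eq_mul,
    mul_one] at h2
  have h4 : ∑ ε : Fin n → Bool, q (u + ∑ i, (if ε i then (1 : ℝ) else -1) • v)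
      = ∑ ε : Fin n → Bool, ‖P (u + ∑ i, (if ε i then (1 : ℝ) else -1) • v)‖ ^ 2 :=
    le_antisymm (Finset.sum_le_sum fun ε _ => hle _) (h1.trans (by rw [h2]; linarith))
  have h5 := (Finset.sum_eq_sum_iff_of_le fun ε _ => hle _).1 h4 (fun _ => true)
    (Finset.mem_univ _)
  simpa [Nat.cast_smul_eq_nsmul] using h5

/-- Day-type criterion: If a real normed space `X` satisfies, for some
`k ≥ 2`, `∑_ε ‖x₁ + ∑_{i=2}^k ε_i x_i‖² ≤ k·2^(k-1)` for all unit vectors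
`x₁, …, x_k ∈ X` (sum over all sign vectors `ε = (ε₂, …, ε_k)`, `ε_i ∈ {-1, 1}`,
encoded as `ε : Fin k → Bool` with `ε 0 = true`), then the norm satisfies the
parallelogram law. -/
theorem stmt_11 {X : Type*} [NormedAddCommGroup X] [NormedSpace ℝ X]
    (k : ℕ) (hk : 2 ≤ k)
    (h : ∀ x : Fin k → X, (∀ i, ‖x i‖ = 1) →
      ∑ ε ∈ Finset.univ.filter (fun ε : Fin k → Bool => ε ⟨0, by omega⟩ = true),
        ‖∑ i, (if ε i then (1 : ℝ) else -1) • x i‖ ^ 2 ≤ k * 2 ^ (k - 1)) :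
    ∀ x y : X, ‖x + y‖ ^ 2 + ‖x - y‖ ^ 2 = 2 * ‖x‖ ^ 2 + 2 * ‖y‖ ^ 2 := by
  intro x y
  obtain ⟨n, rfl⟩ : ∃ n, k = n + 1 := ⟨k - 1, by omega⟩
  have hn : (0 : ℝ) < n := by exact_mod_cast (by omega : 0 < n)
  let P : ℝ × ℝ →ₗ[ℝ] X :=
    (LinearMap.fst ℝ ℝ ℝ).smulRight x + (LinearMap.snd ℝ ℝ ℝ).smulRight y
  have hP : ∀ p, P p = p.1 • x + p.2 • y := fun p => by simp [P]
  by_cases hinj : ∀ p, P p = 0 → p = 0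
  · let f : ℝ × ℝ → ℝ := fun p => ‖P p‖ ^ 2
    have hf : Continuous f := by simp only [f, hP]; fun_prop
    have hhom : ∀ (r : ℝ) p, f (r • p) = r ^ 2 * f p := fun r p => by
      simp only [f, map_smul, norm_smul, mul_pow, Real.norm_eq_abs, sq_abs]
    have hpos : ∀ p, p ≠ 0 → 0 < f p := fun p hp => by
      have : P p ≠ 0 := fun h0 => hp (hinj p h0)
      simp only [f]; positivity
    obtain ⟨a, b, c, ha, hc, hD, hle, hmax⟩ := exists_max_det f hf hhom hpos
    let C : Set (ℝ × ℝ) := {p | binForm a b c p = f p}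
    have hCc : IsClosed C := isClosed_eq (continuous_binForm a b c) hf
    have hCs : ∀ (r : ℝ), ∀ p ∈ C, r • p ∈ C := fun r p hp => by
      simp only [C, Set.mem_ofPred_eq] at hp ⊢
      rw [hhom, binForm_smul, hp]
    have hunit : ∀ p, p ≠ 0 → p ∈ C →
        ‖P (‖P p‖⁻¹ • p)‖ = 1 ∧ binForm a b c (‖P p‖⁻¹ • p) = 1 := fun p hp hpC => by
      have h0 : ‖P p‖ ≠ 0 := fun h0 => hp (hinj p (norm_eq_zero.1 h0))
      have h1 : ‖P (‖P p‖⁻¹ • p)‖ = 1 := by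
        rw [map_smul, norm_smul, norm_inv, norm_norm, inv_mul_cancel₀ h0]
      refine ⟨h1, (hCs _ p hpC).trans ?_⟩
      simp only [f, h1, one_pow]
    have hCcone : ∀ p ∈ C, ∀ p' ∈ C, ∃ α β : ℝ, 0 < α ∧ 0 < β ∧ α • p + β • p' ∈ C := by
      intro p hp p' hp'
      by_cases h0 : p = 0
      · exact ⟨1, 1, one_pos, one_pos, by simpa [h0] using hp'⟩
      by_cases h0' : p' = 0
      · exact ⟨1, 1, one_pos, one_pos, by simpa [h0'] using hp⟩
      have hN : 0 < ‖P p‖ := norm_pos_iff.2 fun h1 => h0 (hinj p h1)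
      have hN' : 0 < ‖P p'‖ := norm_pos_iff.2 fun h1 => h0' (hinj p' h1)
      refine ⟨‖P p‖⁻¹, n * ‖P p'‖⁻¹, by positivity, by positivity, ?_⟩
      have := contact_add n (fun x hx => by
        have := h x hx
        rw [Nat.add_sub_cancel, Nat.cast_add, Nat.cast_one] at this
        exact this) P (binForm a b c)
        (binForm_parallelogram a b c) hle _ _ (hunit p h0 hp).1 (hunit p' h0' hp').1
        (hunit p h0 hp).2 (hunit p' h0' hp').2
      rwa [smul_smul] at this
    obtain ⟨u, huC, hu⟩ := exists_contact_off_line f hf hhom ha hc hD hle hmax (1, 0) (by simp)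
    obtain ⟨v, hvC, hv⟩ := exists_contact_off_line f hf hhom ha hc hD hle hmax u
      (by rintro rfl; simp at hu)
    have hall : ∀ p, binForm a b c p = f p := fun p => by
      -- Cramer's rule expresses `p` in the basis `u, v`.
      have := add_mem_of_no_gap C hCc hCs hCcone
        (hCs ((v.1 * p.2 - v.2 * p.1) / (v.1 * u.2 - v.2 * u.1)) u huC)
        (hCs ((p.1 * u.2 - p.2 * u.1) / (v.1 * u.2 - v.2 * u.1)) v hvC)
      have hpe : ((v.1 * p.2 - v.2 * p.1) / (v.1 * u.2 - v.2 * u.1)) • u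
          + ((p.1 * u.2 - p.2 * u.1) / (v.1 * u.2 - v.2 * u.1)) • v = p := by
        ext <;> simp only [Prod.fst_add, Prod.snd_add, Prod.smul_fst, Prod.smul_snd, smul_eq_mul]
          <;> field_simp <;> ring
      rwa [hpe] at this
    have h1 := binForm_parallelogram a b c (1, 0) (0, 1)
    simp only [hall] at h1
    simpa [f, hP, sub_eq_add_neg] using h1
  · push Not at hinj
    obtain ⟨p, hp, hp0⟩ := hinj
    rw [hP] at hp
    -- On a line, the parallelogram law is the one for real numbers.
    have hline : ∀ (s t : ℝ) (z : X), ‖s • z + t • z‖ ^ 2 + ‖s • z - t • z‖ ^ 2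
        = 2 * ‖s • z‖ ^ 2 + 2 * ‖t • z‖ ^ 2 := fun s t z => by
      rw [← add_smul, ← sub_smul]
      simp only [norm_smul, mul_pow, Real.norm_eq_abs, sq_abs]
      ring
    by_cases h1 : p.1 = 0
    · have h2 : p.2 ≠ 0 := fun h2 => hp0 (Prod.ext h1 h2)
      have hy : y = 0 := by simpa [h1, h2] using hp
      simpa [hy] using hline 1 0 x
    · have hx : x = (-(p.1⁻¹ * p.2)) • y := by
        have := congrArg (fun z => p.1⁻¹ • z) hp
        simp only [smul_add, smul_smul, inv_mul_cancel₀ h1, one_smul, smul_zero] at this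
        rw [neg_smul]; exact eq_neg_of_add_eq_zero_left this
      simpa [← hx] using hline (-(p.1⁻¹ * p.2)) 1 y
end

section
/- Let (X, ‖·‖) be a real normed space and let k ≥ 2 be a positive integer. If ∑_{ε ∈ {-1,1}^{k-1}} ‖x₁ + ∑_{i=2}^k ε_i x_i‖² ≥ k·2^{k-1} for all unit vectors x₁, ..., x_k ∈ X (i.e. ‖x₁‖ = ⋯ = ‖x_k‖ = 1), then the norm ‖·‖ satisfies the parallelogram law ‖x + y‖² + ‖x − y‖² = 2‖x‖² + 2‖y‖² for all x, y ∈ X (equivalently, by the Jordan–von Neumann theorem, the norm is induced by an inner product). -/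
/-!
The parallelogram law only involves the plane spanned by `x` and `y`, so for independent `x, y`
the norm is pulled back along an injective linear map `L : ℝ × ℝ → X`.

Among the quadratic forms `Q` on the plane with `‖L p‖² ≤ Q p` there is one of least trace
(`exists_min_form`). Call `p` a contact vector if `‖L p‖² = Q p`. Minimality forces two linearly
independent contact vectors: if all of them lay on a line `ℝ u`, subtracting from `Q` a small
multiple of a form of positive trace which is negative at `u` would produce a smaller majorant
(`exists_contact_off_line`).

Since `Q` satisfies the parallelogram law, the average of `Q` over all signed sums
`x₁ ± x₂ ± ⋯ ± x_k` equals `∑ Q xᵢ` (`sum_signs`). For contact vectors of norm one this says that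
the hypothesis, combined with `‖L p‖² ≤ Q p`, holds with equality in every term, so every signed sum
is again a contact vector. Applied to `x₁ = p` and `x₂ = ⋯ = x_k = q`, this gives a contact
vector strictly inside the cone spanned by any two contact vectors (`contact_between`). The set of
contact vectors being closed, the sectors between two independent contact vectors consist of
contact vectors (`contact_segment`); hence `‖L p‖² = Q p` on the whole plane.
-/

/-- The quadratic form `a s² + 2 b s t + c t²` on the plane with coefficients `m = (a, b, c)`. -/
def qform (m : ℝ × ℝ × ℝ) (p : ℝ × ℝ) : ℝ :=
  m.1 * p.1 ^ 2 + 2 * m.2.1 * (p.1 * p.2) + m.2.2 * p.2 ^ 2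

lemma qform_smul (m : ℝ × ℝ × ℝ) (r : ℝ) (p : ℝ × ℝ) : qform m (r • p) = r ^ 2 * qform m p := by
  simp only [qform, Prod.smul_fst, Prod.smul_snd, smul_eq_mul]; ring

lemma qform_parallelogram (m : ℝ × ℝ × ℝ) (p q : ℝ × ℝ) :
    qform m (p + q) + qform m (p - q) = 2 * qform m p + 2 * qform m q := by
  simp only [qform, Prod.fst_add, Prod.snd_add, Prod.fst_sub, Prod.snd_sub]; ring

lemma continuous_qform (m : ℝ × ℝ × ℝ) : Continuous (qform m) := by
  unfold qform; fun_prop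

/-- For a function obeying the parallelogram law, all mixed terms cancel when summing over signs. -/
lemma sum_signs {V : Type*} [AddCommGroup V] [Module ℝ V] (Q : V → ℝ)
    (hQ : ∀ p q, Q (p + q) + Q (p - q) = 2 * Q p + 2 * Q q) (n : ℕ) :
    ∀ (z : V) (x : Fin n → V),
      ∑ ε : Fin n → Bool, Q (z + ∑ i, (if ε i then (1 : ℝ) else -1) • x i)
        = 2 ^ n * (Q z + ∑ i, Q (x i)) := by
  induction n with
  | zero => intro z x; simp
  | succ n ih =>
    intro z x
    rw [← (Fin.consEquiv (fun _ : Fin (n + 1) => Bool)).sum_comp, Fintype.sum_prod_type]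
    simp only [Fin.consEquiv_apply, Fin.sum_univ_succ, Fin.cons_zero, Fin.cons_succ,
      Fintype.sum_bool, if_true, ← add_assoc, ih]
    have := hQ z (x 0)
    simp only [one_smul, Bool.false_eq_true, if_false, neg_smul, ← sub_eq_add_neg]
    rw [pow_succ]
    linear_combination (2 ^ n) * this

lemma sum_filter_cons {n : ℕ} (f : (Fin (n + 1) → Bool) → ℝ) :
    ∑ ε ∈ Finset.univ.filter (fun ε : Fin (n + 1) → Bool => ε 0 = true), f ε
      = ∑ ε : Fin n → Bool, f (Fin.cons true ε) := by
  rw [Finset.sum_filter, ← (Fin.consEquiv (fun _ : Fin (n + 1) => Bool)).sum_comp,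
    Fintype.sum_prod_type]
  simp only [Fin.consEquiv_apply, Fin.cons_zero, Fintype.sum_bool, if_true, Bool.false_eq_true,
    if_false, Finset.sum_const_zero, add_zero]
  rfl

section Plane

variable {X : Type*} [NormedAddCommGroup X] [NormedSpace ℝ X] (L : ℝ × ℝ →ₗ[ℝ] X)

lemma continuous_normSq : Continuous (fun p => ‖L p‖ ^ 2) :=
  (L.continuous_of_finiteDimensional.norm).pow 2

lemma normSq_smul (r : ℝ) (p : ℝ × ℝ) : ‖L (r • p)‖ ^ 2 = r ^ 2 * ‖L p‖ ^ 2 := by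
  rw [map_smul, norm_smul, mul_pow, Real.norm_eq_abs, sq_abs]

/-- Among the quadratic forms dominating the squared norm, one has least trace `a + c`: they form a
closed set, and a bound on the trace bounds the coefficients, all these forms being nonnegative. -/
lemma exists_min_form : ∃ m : ℝ × ℝ × ℝ, (∀ p, ‖L p‖ ^ 2 ≤ qform m p) ∧
    ∀ m' : ℝ × ℝ × ℝ, (∀ p, ‖L p‖ ^ 2 ≤ qform m' p) → m.1 + m.2.2 ≤ m'.1 + m'.2.2 := by
  set A := ‖L (1, 0)‖
  set B := ‖L (0, 1)‖
  set m₀ : ℝ × ℝ × ℝ := (2 * A ^ 2, 0, 2 * B ^ 2) with hm₀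
  have h₀ : ∀ p, ‖L p‖ ^ 2 ≤ qform m₀ p := by
    intro p
    have h1 : ‖L p‖ ≤ |p.1| * A + |p.2| * B := by
      have : p = p.1 • ((1 : ℝ), (0 : ℝ)) + p.2 • ((0 : ℝ), (1 : ℝ)) := by ext <;> simp
      calc ‖L p‖ = ‖p.1 • L (1, 0) + p.2 • L (0, 1)‖ := by
            rw [← map_smul, ← map_smul, ← map_add, ← this]
        _ ≤ _ := by
          refine (norm_add_le _ _).trans ?_
          rw [norm_smul, norm_smul, Real.norm_eq_abs, Real.norm_eq_abs]
    have h2 : ‖L p‖ ^ 2 ≤ (|p.1| * A + |p.2| * B) ^ 2 := by gcongr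
    have h3 : qform m₀ p = 2 * (|p.1| * A) ^ 2 + 2 * (|p.2| * B) ^ 2 := by
      simp only [qform, hm₀, mul_pow, sq_abs]; ring
    nlinarith [sq_nonneg (|p.1| * A - |p.2| * B)]
  set T := m₀.1 + m₀.2.2 with hT
  let F : Set (ℝ × ℝ × ℝ) := {m | (∀ p, ‖L p‖ ^ 2 ≤ qform m p) ∧ m.1 + m.2.2 ≤ T}
  have hFc : IsClosed F := by
    apply IsClosed.inter
    · change IsClosed {m : ℝ × ℝ × ℝ | ∀ p, ‖L p‖ ^ 2 ≤ qform m p}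
      rw [Set.ofPred_forall]
      refine isClosed_iInter fun p => isClosed_le continuous_const ?_
      unfold qform; fun_prop
    · have hc : Continuous fun m : ℝ × ℝ × ℝ => m.1 + m.2.2 := by fun_prop
      exact isClosed_le hc continuous_const
  have hFb : F ⊆ Set.Icc 0 T ×ˢ (Set.Icc (-T) T ×ˢ Set.Icc 0 T) := by
    rintro ⟨a, b, c⟩ ⟨h1, h2⟩
    have e1 := (sq_nonneg _).trans (h1 (1, 0))
    have e2 := (sq_nonneg _).trans (h1 (0, 1))
    have e3 := (sq_nonneg _).trans (h1 (1, 1))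
    have e4 := (sq_nonneg _).trans (h1 (1, -1))
    simp only [qform] at e1 e2 e3 e4 h2
    norm_num at e1 e2 e3 e4
    simp only [Set.mem_prod, Set.mem_Icc]
    refine ⟨⟨?_, ?_⟩, ⟨?_, ?_⟩, ?_, ?_⟩ <;> linarith
  have hFk : IsCompact F :=
    (isCompact_Icc.prod (isCompact_Icc.prod isCompact_Icc)).of_isClosed_subset hFc hFb
  obtain ⟨m, hm, hmin⟩ := hFk.exists_isMinOn ⟨m₀, h₀, le_rfl⟩
    (f := fun m : ℝ × ℝ × ℝ => m.1 + m.2.2) (by fun_prop)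
  refine ⟨m, hm.1, fun m' hm' => ?_⟩
  by_cases h : m'.1 + m'.2.2 ≤ T
  · exact hmin ⟨hm', h⟩
  · exact hm.2.trans (not_le.mp h).le

/-- A majorant of least trace touches the squared norm outside every given line `ℝ u`. -/
lemma exists_contact_off_line_s12 {m : ℝ × ℝ × ℝ} (hm : ∀ p, ‖L p‖ ^ 2 ≤ qform m p)
    (hmin : ∀ m' : ℝ × ℝ × ℝ, (∀ p, ‖L p‖ ^ 2 ≤ qform m' p) → m.1 + m.2.2 ≤ m'.1 + m'.2.2)
    (u : ℝ × ℝ) (hu : u ≠ 0) :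
    ∃ w, ‖L w‖ ^ 2 = qform m w ∧ u.2 * w.1 - u.1 * w.2 ≠ 0 := by
  by_contra! hcon
  have hu' : 0 < u.1 ^ 2 + u.2 ^ 2 := by
    by_contra hle
    apply hu
    have h1 : u.1 = 0 := by nlinarith [sq_nonneg u.1, sq_nonneg u.2]
    have h2 : u.2 = 0 := by nlinarith [sq_nonneg u.1, sq_nonneg u.2]
    exact Prod.ext h1 h2
  -- `P v = 2 (u₂ v₁ - u₁ v₂)² - (u₁ v₁ + u₂ v₂)²` has trace `|u|²` and is negative on `ℝ u`.
  let P : ℝ × ℝ × ℝ := (2 * u.2 ^ 2 - u.1 ^ 2, -3 * (u.1 * u.2), 2 * u.1 ^ 2 - u.2 ^ 2)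
  have hP : ∀ v, qform P v = 2 * (u.2 * v.1 - u.1 * v.2) ^ 2 - (u.1 * v.1 + u.2 * v.2) ^ 2 := by
    intro v; simp only [qform, P]; ring
  let K : Set (ℝ × ℝ) := {v | v.1 ^ 2 + v.2 ^ 2 = 1}
  have hK : IsCompact K := by
    refine (isCompact_Icc (a := (-1 : ℝ)) (b := 1)).prod
      (isCompact_Icc (a := (-1 : ℝ)) (b := 1)) |>.of_isClosed_subset
      (isClosed_eq (by fun_prop) continuous_const) ?_
    intro v hv
    have hv : v.1 ^ 2 + v.2 ^ 2 = 1 := hv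
    simp only [Set.mem_prod, Set.mem_Icc]
    refine ⟨⟨?_, ?_⟩, ?_, ?_⟩ <;> nlinarith [sq_nonneg v.1, sq_nonneg v.2]
  have hK' : IsCompact (K ∩ {v | 0 ≤ qform P v}) :=
    hK.inter_right (isClosed_le continuous_const (continuous_qform P))
  have hpos : ∀ v ∈ K ∩ {v | 0 ≤ qform P v}, 0 < qform m v - ‖L v‖ ^ 2 := by
    rintro v ⟨hv, hv2⟩
    have hv : v.1 ^ 2 + v.2 ^ 2 = 1 := hv
    have hv2 : 0 ≤ qform P v := hv2
    rcases (hm v).lt_or_eq with h | h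
    · linarith
    · exfalso
      have h0 := hcon v h
      rw [hP, h0] at hv2
      nlinarith [sq_nonneg (u.1 * v.1 + u.2 * v.2)]
  obtain ⟨δ₀, hδ₀, hδ⟩ : ∃ d > 0, ∀ v ∈ K ∩ {v | 0 ≤ qform P v}, d ≤ qform m v - ‖L v‖ ^ 2 :=
    hK'.exists_forall_le' ((continuous_qform m).sub (continuous_normSq L)).continuousOn hpos
  -- `qform P ≤ M` on the unit circle.
  set M := 2 * (u.1 ^ 2 + u.2 ^ 2) with hM
  have hMpos : 0 < M := by positivity
  have hPM : ∀ v ∈ K, qform P v ≤ M := by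
    intro v hv
    have hv : v.1 ^ 2 + v.2 ^ 2 = 1 := hv
    have : M = 2 * (u.2 * v.1 - u.1 * v.2) ^ 2 + 2 * (u.1 * v.1 + u.2 * v.2) ^ 2 := by
      rw [hM]; linear_combination (-2 * (u.1 ^ 2 + u.2 ^ 2)) * hv
    rw [hP]
    nlinarith [sq_nonneg (u.1 * v.1 + u.2 * v.2)]
  set δ := δ₀ / M with hδdef
  have hδpos : 0 < δ := by positivity
  let m' : ℝ × ℝ × ℝ := (m.1 - δ * P.1, m.2.1 - δ * P.2.1, m.2.2 - δ * P.2.2)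
  have hm' : ∀ v, qform m' v = qform m v - δ * qform P v := by
    intro v; simp only [qform, m']; ring
  have hcirc : ∀ v ∈ K, ‖L v‖ ^ 2 ≤ qform m' v := by
    intro v hv
    rw [hm']
    by_cases hs : 0 ≤ qform P v
    · have h1 := hδ v ⟨hv, hs⟩
      have h2 : δ * qform P v ≤ δ * M := mul_le_mul_of_nonneg_left (hPM v hv) hδpos.le
      have h3 : δ * M = δ₀ := by rw [hδdef]; field_simp
      linarith
    · have := hm v
      nlinarith
  have hall : ∀ v, ‖L v‖ ^ 2 ≤ qform m' v := by
    intro v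
    set r := √(v.1 ^ 2 + v.2 ^ 2) with hr
    have hr2 : r ^ 2 = v.1 ^ 2 + v.2 ^ 2 := Real.sq_sqrt (by positivity)
    rcases eq_or_ne r 0 with h0 | h0
    · have : v.1 ^ 2 + v.2 ^ 2 = 0 := by rw [← hr2, h0]; norm_num
      have h1 : v.1 = 0 := by nlinarith [sq_nonneg v.1, sq_nonneg v.2]
      have h2 : v.2 = 0 := by nlinarith [sq_nonneg v.1, sq_nonneg v.2]
      have : v = 0 := Prod.ext h1 h2
      subst this; simp [qform]
    · have hv : v = r • (r⁻¹ • v) := by rw [smul_smul, mul_inv_cancel₀ h0, one_smul]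
      have hk : r⁻¹ • v ∈ K := by
        change (r⁻¹ * v.1) ^ 2 + (r⁻¹ * v.2) ^ 2 = 1
        rw [mul_pow, mul_pow, ← mul_add, ← hr2, ← mul_pow, inv_mul_cancel₀ h0, one_pow]
      rw [hv, normSq_smul, qform_smul]
      exact mul_le_mul_of_nonneg_left (hcirc _ hk) (sq_nonneg r)
  have := hmin m' hall
  have htr : P.1 + P.2.2 = u.1 ^ 2 + u.2 ^ 2 := by simp only [P]; ring
  have h3 : m'.1 + m'.2.2 = m.1 + m.2.2 - δ * (P.1 + P.2.2) := by simp only [m']; ring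
  rw [h3, htr] at this
  nlinarith [mul_pos hδpos hu']

lemma contact_smul {m : ℝ × ℝ × ℝ} {p : ℝ × ℝ} (hp : ‖L p‖ ^ 2 = qform m p) (r : ℝ) :
    ‖L (r • p)‖ ^ 2 = qform m (r • p) := by
  rw [normSq_smul, qform_smul, hp]

/-- If `p` and `q` are contact vectors of norm one, then `p + n q` is a contact vector, because
every term of the averaged inequality must be an equality. -/
lemma contact_unit {n : ℕ}
    (h : ∀ x : Fin (n + 1) → X, (∀ i, ‖x i‖ = 1) →
      ∑ ε ∈ Finset.univ.filter (fun ε : Fin (n + 1) → Bool => ε 0 = true),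
        ‖∑ i, (if ε i then (1 : ℝ) else -1) • x i‖ ^ 2 ≥ (n + 1) * 2 ^ n)
    {m : ℝ × ℝ × ℝ} (hm : ∀ p, ‖L p‖ ^ 2 ≤ qform m p) {p q : ℝ × ℝ}
    (hp : ‖L p‖ ^ 2 = qform m p) (hq : ‖L q‖ ^ 2 = qform m q) (hp1 : ‖L p‖ = 1)
    (hq1 : ‖L q‖ = 1) :
    ‖L (p + (n : ℝ) • q)‖ ^ 2 = qform m (p + (n : ℝ) • q) := by
  have h1 := h (Fin.cons (L p) (fun _ => L q)) (by
    intro i; refine Fin.cases ?_ (fun j => ?_) i <;> simp [hp1, hq1])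
  rw [sum_filter_cons] at h1
  simp only [Fin.sum_univ_succ, Fin.cons_zero, Fin.cons_succ, if_true, one_smul] at h1
  simp only [← map_smul, ← map_sum, ← map_add] at h1
  have h2 := sum_signs (qform m) (qform_parallelogram m) n p (fun _ => q)
  rw [← hp, ← hq, hp1, hq1] at h2
  have h3 : ∑ ε : Fin n → Bool, qform m (p + ∑ i, (if ε i then (1 : ℝ) else -1) • q)
      ≤ ∑ ε : Fin n → Bool, ‖L (p + ∑ i, (if ε i then (1 : ℝ) else -1) • q)‖ ^ 2 := by
    rw [h2]
    refine le_trans (le_of_eq ?_) h1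
    simp; ring
  have h4 := (Finset.sum_eq_sum_iff_of_le (s := Finset.univ)
    (fun (ε : Fin n → Bool) _ => hm (p + ∑ i, (if ε i then (1 : ℝ) else -1) • q))).1
    (le_antisymm (Finset.sum_le_sum fun ε _ => hm _) h3) (fun _ => true) (Finset.mem_univ _)
  simpa [← Nat.cast_smul_eq_nsmul ℝ] using h4

/-- Strictly inside the cone spanned by two nonzero contact vectors there is another one. -/
lemma contact_between {n : ℕ} (hn : 1 ≤ n) (hL : Function.Injective L)
    (h : ∀ x : Fin (n + 1) → X, (∀ i, ‖x i‖ = 1) →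
      ∑ ε ∈ Finset.univ.filter (fun ε : Fin (n + 1) → Bool => ε 0 = true),
        ‖∑ i, (if ε i then (1 : ℝ) else -1) • x i‖ ^ 2 ≥ (n + 1) * 2 ^ n)
    {m : ℝ × ℝ × ℝ} (hm : ∀ p, ‖L p‖ ^ 2 ≤ qform m p) {p q : ℝ × ℝ}
    (hp : ‖L p‖ ^ 2 = qform m p) (hq : ‖L q‖ ^ 2 = qform m q) (hp0 : p ≠ 0) (hq0 : q ≠ 0) :
    ∃ α β : ℝ, 0 < α ∧ 0 < β ∧ ‖L (α • p + β • q)‖ ^ 2 = qform m (α • p + β • q) := by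
  have key : ∀ v : ℝ × ℝ, v ≠ 0 → 0 < ‖L v‖ := fun v hv =>
    norm_pos_iff.2 fun h0 => hv (hL (by rw [h0, map_zero]))
  have unit : ∀ v : ℝ × ℝ, v ≠ 0 → ‖L (‖L v‖⁻¹ • v)‖ = 1 := fun v hv => by
    rw [map_smul, norm_smul, norm_inv, norm_norm, inv_mul_cancel₀ (key v hv).ne']
  have hn' : (0 : ℝ) < n := by exact_mod_cast hn
  refine ⟨‖L p‖⁻¹, n * ‖L q‖⁻¹, inv_pos.2 (key p hp0), mul_pos hn' (inv_pos.2 (key q hq0)), ?_⟩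
  have := contact_unit L h hm (contact_smul L hp ‖L p‖⁻¹) (contact_smul L hq ‖L q‖⁻¹)
    (unit p hp0) (unit q hq0)
  rwa [smul_smul] at this

/-- A closed set of reals having a point strictly between any two of its points in `[0, 1]`
contains `[0, 1]` once it contains `0` and `1`: it has no gaps. -/
lemma Icc_subset_of_between {S : Set ℝ} (hS : IsClosed S) (h0 : (0 : ℝ) ∈ S) (h1 : (1 : ℝ) ∈ S)
    (hb : ∀ a ∈ S, ∀ b ∈ S, 0 ≤ a → a < b → b ≤ 1 → ∃ c ∈ S, a < c ∧ c < b) :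
    Set.Icc 0 1 ⊆ S := by
  intro t ht
  by_contra hts
  obtain ⟨a, ha, hamax⟩ := (isCompact_Icc.inter_left hS :
    IsCompact (S ∩ Set.Icc 0 t)).exists_isGreatest ⟨0, h0, le_rfl, ht.1⟩
  obtain ⟨b, hb', hbmin⟩ := (isCompact_Icc.inter_left hS :
    IsCompact (S ∩ Set.Icc t 1)).exists_isLeast ⟨1, h1, ht.2, le_rfl⟩
  have hat : a < t := lt_of_le_of_ne ha.2.2 (fun e => hts (e ▸ ha.1))
  have htb : t < b := lt_of_le_of_ne hb'.2.1 (fun e => hts (e ▸ hb'.1))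
  obtain ⟨c, hc, hac, hcb⟩ := hb a ha.1 b hb'.1 ha.2.1 (hat.trans htb) hb'.2.2
  rcases le_total c t with hct | hct
  · exact absurd (hamax ⟨hc, ha.2.1.trans hac.le, hct⟩) (not_le.2 hac)
  · exact absurd (hbmin ⟨hc, hct, hcb.le.trans hb'.2.2⟩) (not_le.2 hcb)

/-- The cone spanned by two independent contact vectors consists of contact vectors. -/
lemma contact_segment {n : ℕ} (hn : 1 ≤ n) (hL : Function.Injective L)
    (h : ∀ x : Fin (n + 1) → X, (∀ i, ‖x i‖ = 1) →
      ∑ ε ∈ Finset.univ.filter (fun ε : Fin (n + 1) → Bool => ε 0 = true),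
        ‖∑ i, (if ε i then (1 : ℝ) else -1) • x i‖ ^ 2 ≥ (n + 1) * 2 ^ n)
    {m : ℝ × ℝ × ℝ} (hm : ∀ p, ‖L p‖ ^ 2 ≤ qform m p) {p q : ℝ × ℝ}
    (hp : ‖L p‖ ^ 2 = qform m p) (hq : ‖L q‖ ^ 2 = qform m q)
    (hpq : p.2 * q.1 - p.1 * q.2 ≠ 0) (s t : ℝ) (hs : 0 ≤ s) (ht : 0 ≤ t) :
    ‖L (s • p + t • q)‖ ^ 2 = qform m (s • p + t • q) := by
  let g : ℝ → ℝ × ℝ := fun r => (1 - r) • p + r • q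
  have hg0 : ∀ r, g r ≠ 0 := by
    intro r hr
    have e1 : (1 - r) * p.1 + r * q.1 = 0 := congrArg Prod.fst hr
    have e2 : (1 - r) * p.2 + r * q.2 = 0 := congrArg Prod.snd hr
    have e3 : r * (p.2 * q.1 - p.1 * q.2) = 0 := by linear_combination p.2 * e1 - p.1 * e2
    have e4 : (1 - r) * (p.2 * q.1 - p.1 * q.2) = 0 := by linear_combination q.1 * e2 - q.2 * e1
    exact hpq (by linear_combination e3 + e4)
  have hgc : Continuous g := by fun_prop
  have hS : IsClosed {r : ℝ | ‖L (g r)‖ ^ 2 = qform m (g r)} :=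
    isClosed_eq ((continuous_normSq L).comp hgc) ((continuous_qform m).comp hgc)
  have hsub := Icc_subset_of_between hS (by simpa [g] using hp) (by simpa [g] using hq) (by
    intro a ha b hb _ hab _
    obtain ⟨α, β, hα, hβ, hc⟩ := contact_between L hn hL h hm ha hb (hg0 a) (hg0 b)
    have hαβ : 0 < α + β := add_pos hα hβ
    refine ⟨(α * a + β * b) / (α + β), ?_, ?_, ?_⟩
    · have : g ((α * a + β * b) / (α + β)) = (α + β)⁻¹ • (α • g a + β • g b) := by
        ext <;> simp [g] <;> field_simp <;> ring
      change ‖L (g _)‖ ^ 2 = qform m (g _)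
      rw [this]
      exact contact_smul L hc _
    · rw [lt_div_iff₀ hαβ]; nlinarith
    · rw [div_lt_iff₀ hαβ]; nlinarith)
  rcases (add_nonneg hs ht).eq_or_lt with h0 | h0
  · have hs0 : s = 0 := by linarith
    have ht0 : t = 0 := by linarith
    subst hs0 ht0
    simp [qform]
  · have hr : t / (s + t) ∈ Set.Icc (0 : ℝ) 1 :=
      ⟨by positivity, by rw [div_le_one h0]; linarith⟩
    have hc : ‖L (g (t / (s + t)))‖ ^ 2 = qform m (g (t / (s + t))) := hsub hr
    have : s • p + t • q = (s + t) • g (t / (s + t)) := by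
      ext <;> simp [g] <;> field_simp <;> ring
    rw [this]
    exact contact_smul L hc _

/-- On the plane the squared norm is a quadratic form. -/
lemma exists_form_eq {n : ℕ} (hn : 1 ≤ n) (hL : Function.Injective L)
    (h : ∀ x : Fin (n + 1) → X, (∀ i, ‖x i‖ = 1) →
      ∑ ε ∈ Finset.univ.filter (fun ε : Fin (n + 1) → Bool => ε 0 = true),
        ‖∑ i, (if ε i then (1 : ℝ) else -1) • x i‖ ^ 2 ≥ (n + 1) * 2 ^ n) :
    ∃ m, ∀ p, ‖L p‖ ^ 2 = qform m p := by
  obtain ⟨m, hm, hmin⟩ := exists_min_form L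
  refine ⟨m, ?_⟩
  obtain ⟨p, hp, hp0⟩ := exists_contact_off_line_s12 L hm hmin (1, 0) (by simp)
  obtain ⟨q, hq, hpq⟩ := exists_contact_off_line_s12 L hm hmin p (by rintro rfl; simp at hp0)
  have hq' : ‖L (-q)‖ ^ 2 = qform m (-q) := by simpa using contact_smul L hq (-1)
  have hpq' : p.2 * (-q).1 - p.1 * (-q).2 ≠ 0 := by
    intro e; apply hpq; simp only [Prod.fst_neg, Prod.snd_neg] at e; linarith
  -- Up to a global sign, every vector lies in the cone of `p, q` or in that of `p, -q`.
  have half : ∀ s t : ℝ, 0 ≤ s → ‖L (s • p + t • q)‖ ^ 2 = qform m (s • p + t • q) := by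
    intro s t hs
    rcases le_total 0 t with ht | ht
    · exact contact_segment L hn hL h hm hp hq hpq s t hs ht
    · simpa using contact_segment L hn hL h hm hp hq' hpq' s (-t) hs (neg_nonneg.2 ht)
  have full : ∀ s t : ℝ, ‖L (s • p + t • q)‖ ^ 2 = qform m (s • p + t • q) := by
    intro s t
    rcases le_total 0 s with hs | hs
    · exact half s t hs
    · have e : s • p + t • q = (-1 : ℝ) • ((-s) • p + (-t) • q) := by module
      rw [e]
      exact contact_smul L (half (-s) (-t) (neg_nonneg.2 hs)) (-1)
  intro v
  -- Cramer's rule.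
  have hv : v = ((q.1 * v.2 - q.2 * v.1) / (p.2 * q.1 - p.1 * q.2)) • p
      + ((p.2 * v.1 - p.1 * v.2) / (p.2 * q.1 - p.1 * q.2)) • q := by
    generalize hD : p.2 * q.1 - p.1 * q.2 = D at hpq
    ext <;> simp only [Prod.fst_add, Prod.snd_add, Prod.smul_fst, Prod.smul_snd, smul_eq_mul] <;>
      field_simp <;> rw [← hD] <;> ring
  rw [hv]
  exact full _ _

end Plane

/-- Day-type criterion: If a real normed space `X` satisfies, for some
`k ≥ 2`, `∑_ε ‖x₁ + ∑_{i=2}^k ε_i x_i‖² ≥ k·2^(k-1)` for all unit vectors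
`x₁, …, x_k ∈ X` (sum over all sign vectors `ε = (ε₂, …, ε_k)`, `ε_i ∈ {-1, 1}`,
encoded as `ε : Fin k → Bool` with `ε 0 = true`), then the norm satisfies the
parallelogram law. -/
theorem stmt_12 {X : Type*} [NormedAddCommGroup X] [NormedSpace ℝ X]
    (k : ℕ) (hk : 2 ≤ k)
    (h : ∀ x : Fin k → X, (∀ i, ‖x i‖ = 1) →
      ∑ ε ∈ Finset.univ.filter (fun ε : Fin k → Bool => ε ⟨0, by omega⟩ = true),
        ‖∑ i, (if ε i then (1 : ℝ) else -1) • x i‖ ^ 2 ≥ k * 2 ^ (k - 1)) :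
    ∀ x y : X, ‖x + y‖ ^ 2 + ‖x - y‖ ^ 2 = 2 * ‖x‖ ^ 2 + 2 * ‖y‖ ^ 2 := by
  intro x y
  obtain ⟨n, rfl⟩ : ∃ n, k = n + 1 := ⟨k - 1, by omega⟩
  have h' : ∀ x : Fin (n + 1) → X, (∀ i, ‖x i‖ = 1) →
      ∑ ε ∈ Finset.univ.filter (fun ε : Fin (n + 1) → Bool => ε 0 = true),
        ‖∑ i, (if ε i then (1 : ℝ) else -1) • x i‖ ^ 2 ≥ (n + 1) * 2 ^ n := by
    intro x hx
    have := h x hx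
    rw [Nat.add_sub_cancel] at this
    push_cast at this
    exact this
  let L : ℝ × ℝ →ₗ[ℝ] X :=
    (LinearMap.toSpanSingleton ℝ X x).coprod (LinearMap.toSpanSingleton ℝ X y)
  have hLa : ∀ p : ℝ × ℝ, L p = p.1 • x + p.2 • y := by intro p; simp [L]
  by_cases hL : Function.Injective L
  · obtain ⟨m, hm⟩ := exists_form_eq L (by omega) hL h'
    have hx : L (1, 0) = x := by simp [hLa]
    have hy : L (0, 1) = y := by simp [hLa]
    rw [← hx, ← hy, ← map_add, ← map_sub, hm, hm, hm, hm]
    exact qform_parallelogram m _ _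
  · -- `x` and `y` lie on a common line, where the norm is a multiple of the absolute value.
    have line : ∀ (z : X) (a b : ℝ), ‖a • z + b • z‖ ^ 2 + ‖a • z - b • z‖ ^ 2
        = 2 * ‖a • z‖ ^ 2 + 2 * ‖b • z‖ ^ 2 := by
      intro z a b
      rw [← add_smul, ← sub_smul]
      simp only [norm_smul, mul_pow, Real.norm_eq_abs, sq_abs]
      ring
    rw [injective_iff_map_eq_zero] at hL
    push Not at hL
    obtain ⟨⟨s, t⟩, h0, hne⟩ := hL
    rw [hLa] at h0
    simp only at h0
    by_cases hs : s = 0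
    · have ht : t ≠ 0 := fun ht => hne (by simp [hs, ht])
      have hy : y = 0 := by simpa [hs, ht] using h0
      simpa [hy] using line x 1 0
    · have hx : x = (-(t / s)) • y := by
        have e : s • x = (-t) • y := by rw [neg_smul]; exact eq_neg_of_add_eq_zero_left h0
        have e' : x = s⁻¹ • (s • x) := by rw [smul_smul, inv_mul_cancel₀ hs, one_smul]
        rw [e', e, smul_smul]
        congr 1
        field_simp
      rw [hx]
      simpa using line y (-(t / s)) 1
end
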